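/- Let μ be the coding of {a, b, c, d} given by μ(a) = d, μ(b) = c, μ(c) = b, μ(d) = a, extended letterwise to finite words. Then for every n ≥ 1 and every word W over {a, b, c, d} of length n: (1) W is a factor of s if and only if μ(W) is a factor of s; (2) if W is a factor of s, then S(W) = M_r(n) if and only if S(μ(W)) = m_r(n). -/

import Mathlib

/-- The alphabet `{a, b, c, d}`. -/
inductive Letter : Type
  | a | b | c | d
deriving DecidableEq

open Letter

/-- The substitution `σ : a ↦ ab, b ↦ ac, c ↦ db, d ↦ dc`. -/
def sub : Letter → List Letter
  | a => [a, b]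
  | b => [a, c]
  | c => [d, b]
  | d => [d, c]

/-- The substitution `σ` extended to finite words by concatenation. -/
def subw (w : List Letter) : List Letter := (w.map sub).flatten

/-- The coding `τ : a, b ↦ 1, c, d ↦ −1`. -/
def τ : Letter → ℤ
  | a => 1
  | b => 1
  | c => -1
  | d => -1

/-- `S(u)`: the sum of `τ` over the letters of `u`. -/
def S (u : List Letter) : ℤ := (u.map τ).sum

/-- The coding `μ : a ↦ d, b ↦ c, c ↦ b, d ↦ a`. -/
def μ : Letter → Letter
  | a => d
  | b => c
  | c => b
  | d => a

/-- The fixed point `s = σ^∞(a)` of the substitution `σ` beginning with `a`: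
its `n`-th letter is the `n`-th letter of `σ^(n+1)(a)` (which has length
`2^(n+1) > n`, and each `σ^k(a)` is a prefix of `σ^(k+1)(a)`). -/
def fp (n : ℕ) : Letter := (subw^[n + 1] [a]).getD n a

/-- The Rudin–Shapiro sequence `r = τ(s)`. -/
def rs (n : ℕ) : ℤ := τ (fp n)

/-- `W` is a factor of the infinite word `s` (occurs as a block of
consecutive letters). -/
def FactorOf (W : List Letter) : Prop :=
  ∃ i, W = (List.range W.length).map fun j => fp (i + j)

/-- First letter of the image under the substitution. -/
def fstL : Letter → Letter
  | a => a
  | b => a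
  | c => d
  | d => d

/-- Second letter of the image under the substitution. -/
def sndL : Letter → Letter
  | a => b
  | b => c
  | c => b
  | d => c

theorem subw_cons (x : Letter) (w : List Letter) :
    subw (x :: w) = fstL x :: sndL x :: subw w := by
  cases x <;> rfl

theorem subw_even (w : List Letter) (n : ℕ) :
    (subw w)[2 * n]? = (w[n]?).map fstL := by
  induction w generalizing n with
  | nil => simp [subw]
  | cons x w ih =>
    rw [subw_cons]
    cases n with
    | zero => simp
    | succ n =>
      have : 2 * (n + 1) = 2 * n + 1 + 1 := by ring
      rw [this, List.getElem?_cons_succ, List.getElem?_cons_succ, ih, List.getElem?_cons_succ]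

theorem subw_odd (w : List Letter) (n : ℕ) :
    (subw w)[2 * n + 1]? = (w[n]?).map sndL := by
  induction w generalizing n with
  | nil => simp [subw]
  | cons x w ih =>
    rw [subw_cons]
    cases n with
    | zero => simp
    | succ n =>
      have : 2 * (n + 1) + 1 = 2 * n + 1 + 1 + 1 := by ring
      rw [this, List.getElem?_cons_succ, List.getElem?_cons_succ, ih, List.getElem?_cons_succ]

theorem iter_succ (k : ℕ) : subw^[k + 1] [a] = subw (subw^[k] [a]) :=
  Function.iterate_succ_apply' _ _ _

theorem iter_exists (k : ℕ) : ∀ n < 2 ^ k, ∃ x, (subw^[k] [a])[n]? = some x := by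
  induction k with
  | zero =>
    intro n hn
    have : n = 0 := by simpa using hn
    subst this
    exact ⟨a, rfl⟩
  | succ k ih =>
    intro n hn
    rw [pow_succ] at hn
    rw [iter_succ]
    obtain ⟨q, rfl | rfl⟩ := Nat.even_or_odd' n
    · obtain ⟨x, hx⟩ := ih q (by omega)
      exact ⟨fstL x, by rw [subw_even, hx]; rfl⟩
    · obtain ⟨x, hx⟩ := ih q (by omega)
      exact ⟨sndL x, by rw [subw_odd, hx]; rfl⟩

theorem iter_stable (k : ℕ) : ∀ (n : ℕ) (x : Letter), (subw^[k] [a])[n]? = some x →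
    (subw^[k + 1] [a])[n]? = some x := by
  induction k with
  | zero =>
    intro n x h
    cases n with
    | zero => simpa [subw, sub] using h
    | succ n => simp at h
  | succ k ih =>
    intro n x h
    rw [iter_succ] at h
    rw [iter_succ]
    obtain ⟨q, rfl | rfl⟩ := Nat.even_or_odd' n
    · rw [subw_even] at h ⊢
      obtain ⟨y, hy, rfl⟩ := Option.map_eq_some_iff.1 h
      rw [ih q y hy]; rfl
    · rw [subw_odd] at h ⊢
      obtain ⟨y, hy, rfl⟩ := Option.map_eq_some_iff.1 h
      rw [ih q y hy]; rfl

theorem iter_stable_le {k l : ℕ} (hkl : k ≤ l) (n : ℕ) (x : Letter)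
    (h : (subw^[k] [a])[n]? = some x) : (subw^[l] [a])[n]? = some x := by
  induction l, hkl using Nat.le_induction with
  | base => exact h
  | succ l _ ih => exact iter_stable l n x ih

theorem fp_of_iter (k n : ℕ) (x : Letter) (h : (subw^[k] [a])[n]? = some x) : fp n = x := by
  obtain ⟨y, hy⟩ := iter_exists (n + 1) n
    (lt_trans (Nat.lt_succ_self n) Nat.lt_two_pow_self)
  have h1 := iter_stable_le (le_max_left k (n + 1)) n x h
  have h2 := iter_stable_le (le_max_right k (n + 1)) n y hy
  have hxy : y = x := by rw [h1] at h2; exact (Option.some.inj h2).symm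
  unfold fp
  rw [List.getD_eq_getElem?_getD, hy, hxy]; rfl

theorem fp_even (n : ℕ) : fp (2 * n) = fstL (fp n) := by
  obtain ⟨y, hy⟩ := iter_exists n n Nat.lt_two_pow_self
  rw [fp_of_iter n n y hy]
  apply fp_of_iter (n + 1)
  rw [iter_succ, subw_even, hy]; rfl

theorem fp_odd (n : ℕ) : fp (2 * n + 1) = sndL (fp n) := by
  obtain ⟨y, hy⟩ := iter_exists n n Nat.lt_two_pow_self
  rw [fp_of_iter n n y hy]
  apply fp_of_iter (n + 1)
  rw [iter_succ, subw_odd, hy]; rfl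

theorem fp_shift (k : ℕ) : ∀ i < 2 ^ k, fp (6 * 2 ^ k + i) = μ (fp i) := by
  induction k with
  | zero =>
    intro i hi
    have : i = 0 := by simpa using hi
    subst this
    decide
  | succ k ih =>
    intro i hi
    rw [pow_succ] at hi
    obtain ⟨q, rfl | rfl⟩ := Nat.even_or_odd' i
    · have e : 6 * 2 ^ (k + 1) + 2 * q = 2 * (6 * 2 ^ k + q) := by ring
      rw [e, fp_even, fp_even, ih q (by omega)]
      cases fp q <;> rfl
    · have e : 6 * 2 ^ (k + 1) + (2 * q + 1) = 2 * (6 * 2 ^ k + q) + 1 := by ring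
      rw [e, fp_odd, fp_odd, ih q (by omega)]
      cases fp q <;> rfl

theorem exists_mirror (i n : ℕ) : ∃ i', ∀ j < n, fp (i' + j) = μ (fp (i + j)) := by
  refine ⟨6 * 2 ^ (i + n) + i, fun j hj => ?_⟩
  rw [add_assoc]
  exact fp_shift (i + n) (i + j) (lt_trans (by omega) Nat.lt_two_pow_self)

theorem factor_mu {W : List Letter} (h : FactorOf W) : FactorOf (W.map μ) := by
  obtain ⟨i, hi⟩ := h
  obtain ⟨i', h'⟩ := exists_mirror i W.length
  refine ⟨i', ?_⟩
  rw [List.length_map]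
  conv_lhs => rw [hi]
  rw [List.map_map]
  apply List.map_congr_left
  intro j hj
  exact (h' j (List.mem_range.1 hj)).symm

theorem mu_mu (W : List Letter) : (W.map μ).map μ = W := by
  rw [List.map_map]
  have : μ ∘ μ = id := by funext x; cases x <;> rfl
  rw [this, List.map_id]

theorem tau_mu (x : Letter) : τ (μ x) = - τ x := by cases x <;> rfl

theorem S_mu (W : List Letter) : S (W.map μ) = - S W := by
  induction W with
  | nil => rfl
  | cons x W ih =>
    simp only [S, List.map_cons, List.sum_cons, tau_mu] at ih ⊢
    rw [ih]; ring

theorem sum_mirror (i n : ℕ) : ∃ i', ∑ j ∈ Finset.range n, rs (i' + j)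
    = - ∑ j ∈ Finset.range n, rs (i + j) := by
  obtain ⟨i', h'⟩ := exists_mirror i n
  refine ⟨i', ?_⟩
  rw [← Finset.sum_neg_distrib]
  apply Finset.sum_congr rfl
  intro j hj
  unfold rs
  rw [h' j (Finset.mem_range.1 hj), tau_mu]

/-- For the coding `μ`, every `n ≥ 1` and every word `W`
of length `n` over `{a, b, c, d}`: `W` is a factor of `s` iff `μ(W)` is a
factor of `s`; and if `W` is a factor of `s`, then `S(W) = M_r(n)` iff
`S(μ(W)) = m_r(n)`. -/
theorem factor_mu_and_max_min
    (M m : ℕ → ℤ)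
    (hM : ∀ n, IsGreatest (Set.range fun i : ℕ => ∑ j ∈ Finset.range n, rs (i + j)) (M n))
    (hm : ∀ n, IsLeast (Set.range fun i : ℕ => ∑ j ∈ Finset.range n, rs (i + j)) (m n))
    (n : ℕ) (hn : 1 ≤ n) (W : List Letter) (hW : W.length = n) :
    (FactorOf W ↔ FactorOf (W.map μ)) ∧
    (FactorOf W → (S W = M n ↔ S (W.map μ) = m n)) := by

  refine ⟨⟨factor_mu, fun h => by simpa only [mu_mu] using factor_mu h⟩, fun _ => ?_⟩
  have key : m n = - M n := by
    obtain ⟨⟨i, hi⟩, hu⟩ := hM n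
    obtain ⟨⟨k, hk⟩, hl⟩ := hm n
    obtain ⟨i', hi'⟩ := sum_mirror i n
    obtain ⟨k', hk'⟩ := sum_mirror k n
    have h1 := hl ⟨i', rfl⟩
    have h2 := hu ⟨k', rfl⟩
    simp only at hi hk h1 h2
    rw [hi', hi] at h1
    rw [hk', hk] at h2
    linarith
  rw [S_mu, key, neg_inj]
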